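/- arXiv:2405.02372 — 3 statements merged into one kernel-verified Lean document; each statement's English description precedes it below -/
import Mathlib

section
/- Let σ > 0 and let H be a real M×N matrix with HᵀH invertible. Define the pre-change Gaussian log-density ℓ_p(y | θ) = −(M/2)·ln(2πσ²) − ‖y − Hθ‖₂²/(2σ²) and the post-change Gaussian log-density ℓ_q(y | θ, a) = −(M/2)·ln(2πσ²) − ‖y − Hθ − a‖₂²/(2σ²). Then for every y ∈ ℝ^M and every x ∈ ℝ^M with Hᵀx = 0, both suprema over θ ∈ ℝ^N are attained and sup_{θ∈ℝ^N} ℓ_q(y | θ, x) − sup_{θ∈ℝ^N} ℓ_p(y | θ) = (2⟨x, y⟩ − ‖x‖₂²)/(2σ²). -/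
open Matrix

theorem aux_orth {M N : ℕ} (H : Matrix (Fin M) (Fin N) ℝ) (r : Fin M → ℝ)
    (hr : Hᵀ.mulVec r = 0) (φ : Fin N → ℝ) : ∑ i, r i * H.mulVec φ i = 0 := by
  have h : r ⬝ᵥ H.mulVec φ = 0 := by
    rw [Matrix.dotProduct_mulVec, ← Matrix.mulVec_transpose, hr, zero_dotProduct]
  exact h

theorem aux_min {M N : ℕ} (H : Matrix (Fin M) (Fin N) ℝ) (r : Fin M → ℝ)
    (hr : Hᵀ.mulVec r = 0) (φ : Fin N → ℝ) :
    ∑ i, r i ^ 2 ≤ ∑ i, (r i - H.mulVec φ i) ^ 2 := by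
  have h := aux_orth H r hr φ
  have e : ∑ i, (r i - H.mulVec φ i) ^ 2
      = ∑ i, r i ^ 2 - 2 * ∑ i, r i * H.mulVec φ i + ∑ i, (H.mulVec φ i) ^ 2 := by
    rw [Finset.mul_sum, ← Finset.sum_sub_distrib, ← Finset.sum_add_distrib]
    exact Finset.sum_congr rfl fun i _ => by ring
  have p : 0 ≤ ∑ i, (H.mulVec φ i) ^ 2 := Finset.sum_nonneg fun i _ => sq_nonneg _
  rw [e, h]
  linarith

/-- Difference of maximized pre- and post-change Gaussian log-likelihoods:
for `x` orthogonal to the column space of `H` (i.e. `Hᵀ x = 0`), both suprema over `θ`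
are attained and `sup_θ ℓ_q(y|θ,x) - sup_θ ℓ_p(y|θ) = (2⟨x,y⟩ - ‖x‖₂²)/(2σ²)`. -/
theorem stmt_4 (M N : ℕ) (σ : ℝ) (hσ : 0 < σ) (H : Matrix (Fin M) (Fin N) ℝ)
    (hinv : IsUnit (Hᵀ * H)) (y x : Fin M → ℝ) (hx : Hᵀ.mulVec x = 0) :
    let ℓp : (Fin N → ℝ) → ℝ := fun θ =>
      -((M : ℝ) / 2) * Real.log (2 * Real.pi * σ ^ 2)
        - (∑ i, (y i - H.mulVec θ i) ^ 2) / (2 * σ ^ 2)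
    let ℓq : (Fin N → ℝ) → ℝ := fun θ =>
      -((M : ℝ) / 2) * Real.log (2 * Real.pi * σ ^ 2)
        - (∑ i, (y i - H.mulVec θ i - x i) ^ 2) / (2 * σ ^ 2)
    ∃ Sp Sq : ℝ, IsGreatest (Set.range ℓp) Sp ∧ IsGreatest (Set.range ℓq) Sq ∧
      Sq - Sp = (2 * (x ⬝ᵥ y) - ∑ i, (x i) ^ 2) / (2 * σ ^ 2) := by
  intro ℓp ℓq
  obtain ⟨θ₀, hθ₀⟩ : ∃ θ₀ : Fin N → ℝ, Hᵀ.mulVec (y - H.mulVec θ₀) = 0 := by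
    refine ⟨(Hᵀ * H)⁻¹.mulVec (Hᵀ.mulVec y), ?_⟩
    rw [Matrix.mulVec_sub, Matrix.mulVec_mulVec, Matrix.mulVec_mulVec,
      Matrix.mul_nonsing_inv _ ((Matrix.isUnit_iff_isUnit_det _).1 hinv), Matrix.one_mulVec,
      sub_self]
  have hq : Hᵀ.mulVec (y - H.mulVec θ₀ - x) = 0 := by
    rw [Matrix.mulVec_sub, hθ₀, hx, sub_zero]
  have hs : 0 < 2 * σ ^ 2 := by positivity
  refine ⟨ℓp θ₀, ℓq θ₀, ⟨⟨θ₀, rfl⟩, ?_⟩, ⟨⟨θ₀, rfl⟩, ?_⟩, ?_⟩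
  · rintro _ ⟨θ, rfl⟩
    have h := aux_min H _ hθ₀ (θ - θ₀)
    have e : ∀ i, (y - H.mulVec θ₀) i - H.mulVec (θ - θ₀) i = y i - H.mulVec θ i := fun i => by
      rw [Matrix.mulVec_sub]; simp only [Pi.sub_apply]; ring
    simp only [e] at h
    exact sub_le_sub_left (div_le_div_of_nonneg_right h hs.le) _
  · rintro _ ⟨θ, rfl⟩
    have h := aux_min H _ hq (θ - θ₀)
    have e : ∀ i, (y - H.mulVec θ₀ - x) i - H.mulVec (θ - θ₀) i = y i - H.mulVec θ i - x i :=
      fun i => by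
        rw [Matrix.mulVec_sub]; simp only [Pi.sub_apply]; ring
    simp only [e] at h
    exact sub_le_sub_left (div_le_div_of_nonneg_right h hs.le) _
  · have h := aux_orth H x hx θ₀
    have e : ∑ i, (y i - H.mulVec θ₀ i - x i) ^ 2 = ∑ i, (y i - H.mulVec θ₀ i) ^ 2
        - 2 * ∑ i, x i * y i + 2 * ∑ i, x i * H.mulVec θ₀ i + ∑ i, x i ^ 2 := by
      rw [Finset.mul_sum, Finset.mul_sum, ← Finset.sum_sub_distrib, ← Finset.sum_add_distrib,
        ← Finset.sum_add_distrib]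
      exact Finset.sum_congr rfl fun i _ => by ring
    simp only [ℓp, ℓq, dotProduct]
    rw [e, h]
    ring
end

section
/- Let f : ℝ^M → ℝ be twice continuously differentiable with L-Lipschitz second derivative, let x ∈ ℝ^M, η > 0, κ ≥ 0 and w ≥ 0. Suppose (1/2)·f″(x)(d, d) ≤ κ‖d‖₂² for all d ∈ ℝ^M, and define the gradient step x⁺ := x − η·∇f(x). If ‖x‖_∞ ≤ w and ‖x⁺‖_∞ ≤ w, then f(x⁺) − f(x) ≤ (κ + (w·L·√M)/3 − 1/η)·‖x⁺ − x‖₂². -/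
theorem aux_compare {g g' B B' : ℝ → ℝ} (hg : ∀ t, HasDerivAt g (g' t) t)
    (hB : ∀ t, HasDerivAt B (B' t) t) (h0 : g 0 ≤ B 0)
    (h : ∀ t, 0 ≤ t → g' t ≤ B' t) (t : ℝ) (ht : 0 ≤ t) : g t ≤ B t := by
  refine image_le_of_deriv_right_le_deriv_boundary (f := g) (f' := g') (B := B) (B' := B')
    (a := 0) (b := t) ?_ ?_ h0 ?_ ?_ ?_ ⟨ht, le_rfl⟩
  · exact fun s _ => (hg s).continuousAt.continuousWithinAt
  · exact fun s _ => (hg s).hasDerivWithinAt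
  · exact fun s _ => (hB s).continuousAt.continuousWithinAt
  · exact fun s _ => (hB s).hasDerivWithinAt
  · exact fun s hs => h s hs.1

theorem aux_taylor {E : Type*} [NormedAddCommGroup E] [NormedSpace ℝ E]
    (f : E → ℝ) (hf : ContDiff ℝ 2 f)
    (L : NNReal) (hL : LipschitzWith L (fderiv ℝ (fderiv ℝ f))) (x d : E) :
    f (x + d) ≤ f x + fderiv ℝ f x d + (1 / 2) * fderiv ℝ (fderiv ℝ f) x d d
      + L / 6 * ‖d‖ ^ 3 := by
  have hd1 : Differentiable ℝ f := hf.differentiable (by norm_num)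
  have hd2 : Differentiable ℝ (fderiv ℝ f) :=
    (hf.fderiv_right (m := 1) (by norm_num)).differentiable (by norm_num)
  have hline : ∀ t : ℝ, HasDerivAt (fun t : ℝ => x + t • d) d t := fun t => by
    simpa using ((hasDerivAt_id t).smul_const d).const_add x
  have hg : ∀ t : ℝ, HasDerivAt (fun t : ℝ => f (x + t • d)) (fderiv ℝ f (x + t • d) d) t :=
    fun t => (hd1 _).hasFDerivAt.comp_hasDerivAt t (hline t)
  have hg1 : ∀ t : ℝ, HasDerivAt (fun t : ℝ => fderiv ℝ f (x + t • d) d)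
      (fderiv ℝ (fderiv ℝ f) (x + t • d) d d) t := fun t => by
    have h := (hd2 (x + t • d)).hasFDerivAt.comp_hasDerivAt t (hline t)
    simpa using h.clm_apply (hasDerivAt_const t d)
  set A := fderiv ℝ (fderiv ℝ f) x d d with hA
  have hg2 : ∀ t : ℝ, 0 ≤ t →
      fderiv ℝ (fderiv ℝ f) (x + t • d) d d ≤ A + L * ‖d‖ ^ 3 * t := by
    intro t ht
    have h1 := hL.dist_le_mul (x + t • d) x
    rw [dist_eq_norm, dist_eq_norm, add_sub_cancel_left, norm_smul, Real.norm_of_nonneg ht] at h1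
    have h2 := (fderiv ℝ (fderiv ℝ f) (x + t • d) - fderiv ℝ (fderiv ℝ f) x).le_opNorm₂ d d
    have h3 := (le_abs_self _).trans h2
    have h4 : ‖fderiv ℝ (fderiv ℝ f) (x + t • d) - fderiv ℝ (fderiv ℝ f) x‖ * ‖d‖ * ‖d‖
        ≤ (L * (t * ‖d‖)) * ‖d‖ * ‖d‖ := by gcongr
    simp only [sub_apply] at h3
    linarith
  have s1 := aux_compare (B := fun t => fderiv ℝ f x d + A * t + L * ‖d‖ ^ 3 / 2 * t ^ 2)
    (B' := fun t => A + L * ‖d‖ ^ 3 * t) hg1 (fun t => by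
      have := (((hasDerivAt_id t).const_mul A).const_add (fderiv ℝ f x d)).add
        ((hasDerivAt_pow 2 t).const_mul (L * ‖d‖ ^ 3 / 2))
      refine this.congr_deriv ?_
      simp; ring) (by simp) hg2
  have s2 := aux_compare (B := fun t => f x + fderiv ℝ f x d * t + A / 2 * t ^ 2
      + L * ‖d‖ ^ 3 / 6 * t ^ 3)
    (B' := fun t => fderiv ℝ f x d + A * t + L * ‖d‖ ^ 3 / 2 * t ^ 2) hg (fun t => by
      have := ((((hasDerivAt_id t).const_mul (fderiv ℝ f x d)).const_add (f x)).add
        ((hasDerivAt_pow 2 t).const_mul (A / 2))).add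
        ((hasDerivAt_pow 3 t).const_mul (L * ‖d‖ ^ 3 / 6))
      refine this.congr_deriv ?_
      simp; ring) (by simp) s1 1 zero_le_one
  simp only [one_smul] at s2
  linarith

/-- Per-block descent inequality (Lemma 1): for a gradient step
`x⁺ = x - η ∇f(x)` with curvature bound `½ f''(x)(d,d) ≤ κ‖d‖²` and
sup-norm bounds `‖x‖_∞ ≤ w`, `‖x⁺‖_∞ ≤ w`,
`f(x⁺) - f(x) ≤ (κ + wL√M/3 - 1/η)‖x⁺ - x‖₂²`. -/
theorem stmt_14 (M : ℕ) (f : EuclideanSpace ℝ (Fin M) → ℝ) (hf : ContDiff ℝ 2 f)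
    (L : NNReal) (hL : LipschitzWith L (fderiv ℝ (fderiv ℝ f)))
    (x : EuclideanSpace ℝ (Fin M)) (η κ w : ℝ) (hη : 0 < η) (hκ : 0 ≤ κ) (hw : 0 ≤ w)
    (hquad : ∀ d : EuclideanSpace ℝ (Fin M),
      (1 / 2) * fderiv ℝ (fderiv ℝ f) x d d ≤ κ * ‖d‖ ^ 2)
    (hx : ∀ i, |x i| ≤ w)
    (hxp : ∀ i, |(x - η • gradient f x) i| ≤ w) :
    f (x - η • gradient f x) - f x ≤
      (κ + w * (L : ℝ) * Real.sqrt M / 3 - 1 / η) * ‖(x - η • gradient f x) - x‖ ^ 2 := by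
  set y := x - η • gradient f x with hy
  have hyx : x + (y - x) = y := by abel
  have hT := aux_taylor f hf L hL x (y - x)
  rw [hyx] at hT
  have hQ := hquad (y - x)
  have hG : fderiv ℝ f x (y - x) = - (1 / η) * ‖y - x‖ ^ 2 := by
    have e : y - x = -(η • gradient f x) := by rw [hy]; abel
    have e2 : fderiv ℝ f x (y - x) = inner ℝ (gradient f x) (y - x) := by
      rw [gradient, InnerProductSpace.toDual_symm_apply]
    rw [e2, e, norm_neg, norm_smul, inner_neg_right, inner_smul_right,
      real_inner_self_eq_norm_sq, Real.norm_of_nonneg hη.le]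
    field_simp
  have hN : ‖y - x‖ ≤ 2 * w * Real.sqrt M := by
    rw [EuclideanSpace.norm_eq]
    have : ∑ i, ‖(y - x) i‖ ^ 2 ≤ ∑ _i : Fin M, (2 * w) ^ 2 := by
      refine Finset.sum_le_sum fun i _ => ?_
      have h1 := abs_le.1 (hx i)
      have h2 := abs_le.1 (hxp i)
      rw [Real.norm_eq_abs]
      refine pow_le_pow_left₀ (abs_nonneg _) (abs_le.2 ?_) 2
      rw [PiLp.sub_apply]
      constructor <;> linarith
    refine (Real.sqrt_le_sqrt this).trans (le_of_eq ?_)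
    rw [Finset.sum_const, Finset.card_univ, Fintype.card_fin, nsmul_eq_mul,
      Real.sqrt_mul (Nat.cast_nonneg _), Real.sqrt_sq (by positivity), mul_comm]
  have hC : (L : ℝ) / 6 * ‖y - x‖ ^ 3 ≤ L / 6 * (2 * w * Real.sqrt M * ‖y - x‖ ^ 2) := by
    rw [pow_succ' _ 2]
    gcongr
  rw [hG] at hT
  linarith
end

section
/- Let τ ≥ 1 be an integer, w ≥ 0, and let u : ℕ → ℝ^M be a sequence with ‖u^k‖_∞ ≤ w for all k. Let V ⊆ ℕ be a set of active iteration indices such that: (i) u^{k+1} = u^k whenever k + 1 ∉ V, and (ii) for every k, the set {k+1, …, k+τ} contains an element of V. For each k, let k̄ denote the smallest element of V strictly greater than k. Then for all natural numbers a ≤ b, Σ_{k=a}^{b} ‖u^{k̄} − u^k‖₂² ≤ τ · Σ_{k=a}^{b} ‖u^{k+1} − u^k‖₂² + 4τ(τ−1)·M·w². -/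
theorem staleness_shift (f : ℕ → ℝ) (C : ℝ) (h0 : ∀ k, 0 ≤ f k) (hC : ∀ k, f k ≤ C)
    (a b : ℕ) (hab : a ≤ b) (i : ℕ) :
    ∑ k ∈ Finset.Icc a b, f (k + i) ≤ ∑ k ∈ Finset.Icc a b, f k + i * C := by
  have key : ∀ g : ℕ → ℝ, ∑ k ∈ Finset.Icc a b, g (k + 1) + g a
      = ∑ k ∈ Finset.Icc a b, g k + g (b + 1) := by
    intro g
    induction b, hab using Nat.le_induction with
    | base => simp [add_comm]
    | succ n hn ih =>
      rw [Finset.sum_Icc_succ_top (by omega), Finset.sum_Icc_succ_top (by omega)]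
      linarith
  induction i with
  | zero => simp
  | succ i ih =>
    have h := key (fun k => f (k + i))
    have e : ∑ k ∈ Finset.Icc a b, f (k + (i + 1)) = ∑ k ∈ Finset.Icc a b, f (k + 1 + i) :=
      Finset.sum_congr rfl fun k _ => by congr 1; omega
    have h1 := h0 (a + i)
    have h2 := hC (b + 1 + i)
    rw [e]
    push_cast
    linarith

/-- Staleness bound for the asynchronous updates: if `u` only changes at active
iterations `V`, every window of `τ` consecutive iterations contains an active one,
`‖u^k‖_∞ ≤ w`, and `kbar k` is the smallest element of `V` strictly greater than `k`,
then `∑_{k=a}^{b} ‖u^{k̄} - u^k‖₂² ≤ τ ∑_{k=a}^{b} ‖u^{k+1} - u^k‖₂² + 4τ(τ-1)Mw²`. -/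
theorem stmt_15 (M τ : ℕ) (hτ : 1 ≤ τ) (w : ℝ) (hw : 0 ≤ w)
    (u : ℕ → EuclideanSpace ℝ (Fin M))
    (hbound : ∀ k, ∀ i, |u k i| ≤ w)
    (V : Set ℕ)
    (hfix : ∀ k, k + 1 ∉ V → u (k + 1) = u k)
    (hactive : ∀ k, ∃ j ∈ V, k + 1 ≤ j ∧ j ≤ k + τ)
    (kbar : ℕ → ℕ)
    (hkbar : ∀ k, kbar k ∈ V ∧ k < kbar k ∧ ∀ j ∈ V, k < j → kbar k ≤ j) :
    ∀ a b : ℕ, a ≤ b →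
      ∑ k ∈ Finset.Icc a b, ‖u (kbar k) - u k‖ ^ 2 ≤
        (τ : ℝ) * ∑ k ∈ Finset.Icc a b, ‖u (k + 1) - u k‖ ^ 2
          + 4 * (τ : ℝ) * ((τ : ℝ) - 1) * (M : ℝ) * w ^ 2 := by
  intro a b hab
  set C : ℝ := 4 * (M : ℝ) * w ^ 2 with hC
  have hd : ∀ k, ‖u (k + 1) - u k‖ ^ 2 ≤ C := by
    intro k
    rw [EuclideanSpace.norm_sq_eq]
    calc ∑ i, ‖(u (k + 1) - u k) i‖ ^ 2 ≤ ∑ _i : Fin M, 4 * w ^ 2 := by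
          apply Finset.sum_le_sum
          intro i _
          have h1 := abs_le.mp (hbound (k + 1) i)
          have h2 := abs_le.mp (hbound k i)
          rw [Real.norm_eq_abs, sq_abs, PiLp.sub_apply]
          nlinarith
      _ = C := by
          simp [hC]
          ring
  have hconst : ∀ k m, k + m < kbar k → u (k + m) = u k := by
    intro k m
    induction m with
    | zero => intro _; rfl
    | succ m ih =>
      intro h
      rw [← ih (by omega)]
      apply hfix (k + m)
      intro hV
      have := (hkbar k).2.2 _ hV (by omega)
      omega
  have hg : ∀ k, ‖u (kbar k) - u k‖ ^ 2 ≤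
      ∑ i ∈ Finset.range τ, ‖u (k + i + 1) - u (k + i)‖ ^ 2 := by
    intro k
    obtain ⟨j, hj, hj1, hj2⟩ := hactive k
    have h1 := (hkbar k).2.2 j hj (by omega)
    have h2 := (hkbar k).2.1
    obtain ⟨m, hm⟩ : ∃ m, kbar k = k + m + 1 := ⟨kbar k - k - 1, by omega⟩
    have h3 := hconst k m (by omega)
    have := Finset.single_le_sum (s := Finset.range τ)
      (f := fun i => ‖u (k + i + 1) - u (k + i)‖ ^ 2) (fun i _ => by positivity)
      (Finset.mem_range.mpr (show m < τ by omega))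
    rw [hm, ← h3]
    exact this
  have hs := staleness_shift (fun k => ‖u (k + 1) - u k‖ ^ 2) C (fun k => by positivity) hd a b hab
  calc ∑ k ∈ Finset.Icc a b, ‖u (kbar k) - u k‖ ^ 2
      ≤ ∑ k ∈ Finset.Icc a b, ∑ i ∈ Finset.range τ, ‖u (k + i + 1) - u (k + i)‖ ^ 2 :=
        Finset.sum_le_sum fun k _ => hg k
    _ = ∑ i ∈ Finset.range τ, ∑ k ∈ Finset.Icc a b, ‖u (k + i + 1) - u (k + i)‖ ^ 2 :=
        Finset.sum_comm
    _ ≤ ∑ _i ∈ Finset.range τ,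
        (∑ k ∈ Finset.Icc a b, ‖u (k + 1) - u k‖ ^ 2 + ((τ : ℝ) - 1) * C) := by
        apply Finset.sum_le_sum
        intro i hi
        refine (hs i).trans ?_
        have hi' : (i : ℝ) + 1 ≤ τ := by exact_mod_cast Finset.mem_range.mp hi
        have hC0 : 0 ≤ C := by positivity
        have := mul_le_mul_of_nonneg_right (show (i : ℝ) ≤ τ - 1 by linarith) hC0
        linarith
    _ = _ := by
        rw [Finset.sum_const, Finset.card_range, nsmul_eq_mul, hC]
        ring
end
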